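/- arXiv:1304.6059 — 3 statements merged into one kernel-verified Lean document; each statement's English description precedes it below -/
import Mathlib

section
/- Let F : A → A' be an additive functor to an additive category A'. Then F factors through u : A → A[S⁻¹]_add if and only if F(s) is an isomorphism for every s ∈ S; moreover, if F(s) is an isomorphism for every s ∈ S, then there exists a unique additive functor G : A[S⁻¹]_add → A' with G ∘ u = F. -/
open CategoryTheory Limits Pretriangulated ZeroObject

universe v u v' u'

section TriangulatedPrelude

variable {C : Type u} [Category.{v} C] [HasZeroObject C] [HasShift C ℤ] [Preadditive C]
  [∀ n : ℤ, (shiftFunctor C n).Additive] [Pretriangulated C]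

/-- The objects of the smallest strict full triangulated subcategory of `C`
containing the set of objects `B`. -/
inductive genSub (B : Set C) : C → Prop
  | of (X : C) (hX : X ∈ B) : genSub B X
  | zero (X : C) (hX : IsZero X) : genSub B X
  | shift (X : C) (n : ℤ) (hX : genSub B X) : genSub B (X⟦n⟧)
  | ext₂ (T : Triangle C) (hT : T ∈ distTriang C) (h₁ : genSub B T.obj₁)
      (h₃ : genSub B T.obj₃) : genSub B T.obj₂

/-- The triangulated subcategory of `C` generated by `B`. -/
def genSubcat (B : Set C) : ObjectProperty C :=
  ObjectProperty.isoClosure (genSub B)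

instance (B : Set C) : (genSubcat B).IsTriangulated :=
  have : ObjectProperty.IsTriangulated (genSub B) :=
    { exists_zero := ⟨0, isZero_zero _, genSub.zero _ (isZero_zero _)⟩
      isStableUnderShiftBy := fun n => ⟨fun X h => genSub.shift X n h⟩
      ext₂' := fun T hT h₁ h₃ =>
        ObjectProperty.le_isoClosure _ _ (genSub.ext₂ T hT h₁ h₃) }
  inferInstanceAs (ObjectProperty.isoClosure (genSub B)).IsTriangulated

/-- The extension-closure of a class of objects `E`: the smallest class containing `E`
and `0` and such that for any distinguished triangle `X ⟶ Y ⟶ Z` with `X, Z` in the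
class, `Y` is also in the class. -/
inductive extClosure (E : Set C) : C → Prop
  | of (X : C) (hX : X ∈ E) : extClosure E X
  | zero (X : C) (hX : IsZero X) : extClosure E X
  | ext₂ (T : Triangle C) (hT : T ∈ distTriang C) (h₁ : extClosure E T.obj₁)
      (h₃ : extClosure E T.obj₃) : extClosure E T.obj₂

/-- `D_{[i,j]}`: the extension-closure of `∪_{i ≤ l ≤ j} D[l]`. -/
def shiftClosure (D : Set C) (i j : ℤ) : Set C :=
  extClosure {X | ∃ (Y : C) (l : ℤ), i ≤ l ∧ l ≤ j ∧ Y ∈ D ∧ X = Y⟦l⟧}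

/-- `D_{≥ i} = ∪_{k ≥ i} D_{[i,k]}`. -/
def shiftClosureGE (D : Set C) (i : ℤ) : Set C := {X | ∃ k, i ≤ k ∧ X ∈ shiftClosure D i k}

/-- `D_{≤ j} = ∪_{k ≤ j} D_{[k,j]}`. -/
def shiftClosureLE (D : Set C) (j : ℤ) : Set C := {X | ∃ k, k ≤ j ∧ X ∈ shiftClosure D k j}

/-- A set of objects `D` is weakly negative if `0 ∈ D` and `Hom(X, Y[i]) = 0`
for all `X, Y ∈ D` and all `i ≥ 2`. -/
def WeaklyNegative (D : Set C) : Prop :=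
  (0 : C) ∈ D ∧ ∀ X ∈ D, ∀ Y ∈ D, ∀ i : ℤ, 2 ≤ i → ∀ f : X ⟶ (Y⟦i⟧), f = 0

end TriangulatedPrelude

attribute [local instance] Limits.hasBinaryBiproducts_of_finite_biproducts

section KPrelude

variable {A : Type u} [Category.{v} A] [Preadditive A] [HasZeroObject A] [HasFiniteBiproducts A]

/-- The two-term cochain complex with `P` in degree `n` and `Q` in degree `n + 1`,
with differential given by `f : P ⟶ Q` (and all other terms `0`).
In particular, `twoComplex (-1) f` is the cone of a morphism `f` of `A`. -/
noncomputable def twoComplex (n : ℤ) {P Q : A} (f : P ⟶ Q) : CochainComplex A ℤ where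
  X i := if i = n then P else if i = n + 1 then Q else 0
  d i j :=
    if hij : i = n ∧ j = n + 1 then
      eqToHom (by simp [hij.1]) ≫ f ≫
        eqToHom (by simp [hij.2, show ¬ ((n : ℤ) + 1 = n) by omega])
    else 0
  shape i j hij := by
    rw [dif_neg]
    rintro ⟨rfl, rfl⟩
    exact hij rfl
  d_comp_d' i j k _ _ := by
    by_cases h1 : i = n ∧ j = n + 1
    · by_cases h2 : j = n ∧ k = n + 1
      · obtain ⟨h1a, h1b⟩ := h1; obtain ⟨h2a, h2b⟩ := h2; omega
      · rw [dif_neg h2, comp_zero]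
    · rw [dif_neg h1, zero_comp]

/-- The chain map from the two-term complex (in degrees `n`, `n + 1`) determined by
`f : P ⟶ Q` to the complex concentrated in degree `n` with value `M`, whose degree `n`
component is `g : P ⟶ M`. -/
noncomputable def twoComplexToSingle (n : ℤ) {P Q M : A} (f : P ⟶ Q) (g : P ⟶ M) :
    twoComplex n f ⟶ (HomologicalComplex.single A (ComplexShape.up ℤ) n).obj M where
  f i :=
    if h : i = n then
      eqToHom (by simp [twoComplex, h]) ≫ g ≫
        (HomologicalComplex.singleObjXSelf (ComplexShape.up ℤ) n M).inv ≫ eqToHom (by rw [h])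
    else 0
  comm' i j hij := by
    simp only [ComplexShape.up_Rel] at hij
    by_cases hj : j = n
    · have hi : ¬ (i = n ∧ j = n + 1) := by rintro ⟨rfl, rfl⟩; omega
      have hd : (twoComplex n f).d i j = 0 := by
        exact dif_neg hi
      rw [hd, zero_comp]
      have : i ≠ n := by omega
      rw [dif_neg this, zero_comp]
    · rw [dif_neg hj]
      rw [comp_zero]
      have : ((HomologicalComplex.single A (ComplexShape.up ℤ) n).obj M).d i j = 0 := by simp
      rw [this, comp_zero]

/-- The quotient functor `C^b(A) ⥤ K(A)` (restricted from all complexes). -/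
noncomputable abbrev homotopyQ : CochainComplex A ℤ ⥤ HomotopyCategory A (ComplexShape.up ℤ) :=
  HomotopyCategory.quotient A (ComplexShape.up ℤ)

/-- The canonical embedding of `A` into the homotopy category, as complexes concentrated
in degree `0`. -/
noncomputable abbrev iotaA : A ⥤ HomotopyCategory A (ComplexShape.up ℤ) :=
  HomologicalComplex.single A (ComplexShape.up ℤ) 0 ⋙ homotopyQ

/-- `B`: the set of cones of elements of `S`, viewed in the homotopy category. -/
def coneSet (S : MorphismProperty A) : Set (HomotopyCategory A (ComplexShape.up ℤ)) :=
  {X | ∃ (P Q : A) (s : P ⟶ Q), S s ∧ X = homotopyQ.obj (twoComplex (-1) s)}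

/-- The Verdier localization functor of the homotopy category by the triangulated
subcategory `𝔻` generated by the cones of elements of `S`. -/
noncomputable abbrev locQ (S : MorphismProperty A) :
    HomotopyCategory A (ComplexShape.up ℤ) ⥤ (genSubcat (coneSet S)).trW.Localization :=
  (genSubcat (coneSet S)).trW.Q

/-- The composite functor `A ⥤ K(A) ⥤ K(A)/𝔻`. -/
noncomputable abbrev uBig (S : MorphismProperty A) :
    A ⥤ (genSubcat (coneSet S)).trW.Localization :=
  iotaA ⋙ locQ S

/-- `A[S⁻¹]_add`: the full subcategory of the Verdier quotient whose
objects are those of `A` (viewed as complexes concentrated in degree `0`). -/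
def AddLoc (S : MorphismProperty A) : Type u := A

noncomputable instance (S : MorphismProperty A) : Category (AddLoc S) where
  Hom X Y := (uBig S).obj X ⟶ (uBig S).obj Y
  id X := 𝟙 ((uBig S).obj X)
  comp f g := f ≫ g

/-- The canonical functor `u : A ⥤ A[S⁻¹]_add` induced by the localization functor. -/
noncomputable def uFun (S : MorphismProperty A) : A ⥤ AddLoc S where
  obj X := X
  map f := (uBig S).map f
  map_id X := (uBig S).map_id X
  map_comp f g := (uBig S).map_comp f g

noncomputable instance (S : MorphismProperty A) : Preadditive (AddLoc S) where
  homGroup X Y := inferInstanceAs (AddCommGroup ((uBig S).obj X ⟶ (uBig S).obj Y))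
  add_comp P Q R f f' g :=
    @Preadditive.add_comp _ _ _ ((uBig S).obj P) ((uBig S).obj Q) ((uBig S).obj R) f f' g
  comp_add P Q R f g g' :=
    @Preadditive.comp_add _ _ _ ((uBig S).obj P) ((uBig S).obj Q) ((uBig S).obj R) f g g'

end KPrelude

/-!
A morphism `s` of `S` becomes invertible in the Verdier quotient because its cone does, so every
functor factoring through `u` inverts `S`. Conversely, if `F` inverts `S`, then the induced functor
between homotopy categories kills the cones of `S`, hence extends to the Verdier quotient; as `A'`
embeds fully faithfully in its homotopy category, restricting this extension to `A` gives `G`.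

For uniqueness, every object of `𝔻` has a weight decomposition whose nonpositive part again lies in
`𝔻`, so a morphism `α : u X ⟶ u Y` is represented by a fraction whose denominator has as cone a
complex `K` in `𝔻` concentrated in nonpositive degrees. Such a fraction yields
`α = u f + u g ≫ β` with `u d ≫ β = u e`, where `d : K⁻¹ ⟶ K⁰` is the differential. A functor `G`
extending `F` sends `u d` to `F d`, which is a split epimorphism since `F` sends `K` to a
contractible complex, so `G β` is determined by `F e`.
-/

section TriangulatedCategory

variable {C : Type u} [Category.{v} C] [HasZeroObject C] [HasShift C ℤ] [Preadditive C]
  [∀ n : ℤ, (shiftFunctor C n).Additive] [Pretriangulated C]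

instance (B : Set C) : (genSubcat B).IsClosedUnderIsomorphisms :=
  inferInstanceAs (ObjectProperty.isoClosure (genSub B)).IsClosedUnderIsomorphisms

lemma genSubcat_of_mem {B : Set C} {X : C} (hX : X ∈ B) : genSubcat B X :=
  ObjectProperty.le_isoClosure _ _ (genSub.of X hX)

lemma genSubcat_le {B : Set C} {P : ObjectProperty C} [P.IsTriangulated]
    [P.IsClosedUnderIsomorphisms] (hB : ∀ X ∈ B, P X) : genSubcat B ≤ P := by
  rw [genSubcat, ObjectProperty.isoClosure_le_iff]
  intro X hX
  induction hX with
  | of X hX => exact hB X hX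
  | zero X hX => exact P.prop_of_isZero hX
  | shift X n _ ih => exact P.le_shift n X ih
  | ext₂ T hT _ _ h₁ h₃ => exact P.ext_of_isTriangulatedClosed₂ T hT h₁ h₃

instance : ObjectProperty.IsTriangulated (IsZero (C := C)) where
  isStableUnderShiftBy n := ⟨fun _ hX => (shiftFunctor C n).map_isZero hX⟩
  toIsTriangulatedClosed₂ := .mk' fun T hT h₁ h₃ => T.isZero₂_of_isZero₁₃ hT h₁ h₃

section Functor

variable {D : Type u'} [Category.{v'} D] [HasZeroObject D] [HasShift D ℤ] [Preadditive D]
  [∀ n : ℤ, (shiftFunctor D n).Additive] [Pretriangulated D]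
  {F : C ⥤ D} [F.CommShift ℤ] [F.IsTriangulated] {B : Set C}

lemma isZero_obj_of_genSubcat (hB : ∀ X ∈ B, IsZero (F.obj X)) {X : C} (hX : genSubcat B X) :
    IsZero (F.obj X) :=
  genSubcat_le (P := ObjectProperty.inverseImage IsZero F) hB X hX

lemma trW_genSubcat_isInvertedBy (hB : ∀ X ∈ B, IsZero (F.obj X)) :
    (genSubcat B).trW.IsInvertedBy F := by
  rintro X Y f ⟨Z, g, h, hT, hZ⟩
  exact (Triangle.isZero₃_iff_isIso₁ _ (F.map_distinguished _ hT)).1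
    (isZero_obj_of_genSubcat hB hZ)

end Functor

section ExtensionProduct

variable {P Q : ObjectProperty C}

lemma extensionProduct_swap_le (h : ∀ ⦃X Y : C⦄, P X → Q Y → ∀ f : X ⟶ Y⟦(1 : ℤ)⟧, f = 0) :
    Q.extensionProduct P ≤ P.extensionProduct Q := by
  rintro E ⟨Y, X, f, g, δ, hT, hY, hX⟩
  obtain ⟨e, -, -⟩ := exists_iso_binaryBiproduct_of_distTriang _ hT (h hX hY δ)
  exact (P.extensionProduct Q).prop_of_iso (e ≪≫ biprod.braiding _ _).symm
    ⟨_, _, _, _, _, binaryBiproductTriangle_distinguished X Y, hX, hY⟩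

lemma extensionProduct_isTriangulatedClosed₂ [IsTriangulated C] [P.IsTriangulatedClosed₂]
    [P.IsClosedUnderIsomorphisms] [Q.IsTriangulatedClosed₂] [Q.IsClosedUnderIsomorphisms]
    (h : ∀ ⦃X Y : C⦄, P X → Q Y → ∀ f : X ⟶ Y⟦(1 : ℤ)⟧, f = 0) :
    (P.extensionProduct Q).IsTriangulatedClosed₂ := by
  have hP : P.extensionProduct P ≤ P :=
    ObjectProperty.extensionProduct_le_of_isTriangulatedClosed₂ le_rfl le_rfl
  have hQ : Q.extensionProduct Q ≤ Q :=
    ObjectProperty.extensionProduct_le_of_isTriangulatedClosed₂ le_rfl le_rfl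
  have hPQ : (P.extensionProduct Q).extensionProduct (P.extensionProduct Q) ≤
      P.extensionProduct Q := by
    calc (P.extensionProduct Q).extensionProduct (P.extensionProduct Q)
      _ = P.extensionProduct ((Q.extensionProduct P).extensionProduct Q) := by
        simp only [ObjectProperty.extensionProduct_assoc]
      _ ≤ P.extensionProduct ((P.extensionProduct Q).extensionProduct Q) :=
        ObjectProperty.monotone_extensionProduct_right _
          (ObjectProperty.monotone_extensionProduct_left _ (extensionProduct_swap_le h))
      _ = (P.extensionProduct P).extensionProduct (Q.extensionProduct Q) := by
        simp only [ObjectProperty.extensionProduct_assoc]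
      _ ≤ P.extensionProduct Q :=
        (ObjectProperty.monotone_extensionProduct_left _ hP).trans
          (ObjectProperty.monotone_extensionProduct_right _ hQ)
  exact .mk' fun T hT h₁ h₃ => hPQ _ ⟨_, _, _, _, _, hT, h₁, h₃⟩

end ExtensionProduct

end TriangulatedCategory

section BoundedAbove

open CochainComplex hiding shiftFunctor

variable (A : Type u) [Category.{v} A] [Preadditive A]

/-- The objects of the homotopy category which are isomorphic to a complex vanishing in all
degrees greater than `n`. -/
def homotopyLE (n : ℤ) : ObjectProperty (HomotopyCategory A (.up ℤ)) :=
  ObjectProperty.map (fun K : CochainComplex A ℤ => K.IsStrictlyLE n) homotopyQ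

instance (n : ℤ) : (homotopyLE A n).IsClosedUnderIsomorphisms :=
  inferInstanceAs (ObjectProperty.map _ _).IsClosedUnderIsomorphisms

variable {A}

lemma homotopyLE_quotient_obj (n : ℤ) (K : CochainComplex A ℤ) [hK : K.IsStrictlyLE n] :
    homotopyLE A n (homotopyQ.obj K) :=
  ObjectProperty.prop_map_obj _ _ hK

lemma leftOrthogonal_homotopyLE_quotient_obj {n m : ℤ} (h : n < m) (K : CochainComplex A ℤ)
    [K.IsStrictlyGE m] : (homotopyLE A n).leftOrthogonal (homotopyQ.obj K) := by
  intro Y f hY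
  obtain ⟨L, hL, ⟨e⟩⟩ := (ObjectProperty.prop_map_iff _ _ _).1 hY
  obtain ⟨g, hg⟩ := homotopyQ.map_surjective (f ≫ e.inv)
  have hg₀ : g = 0 := by
    ext i
    by_cases hi : i < m
    · exact (K.isZero_of_isStrictlyGE m i).eq_of_src _ _
    · exact (L.isZero_of_isStrictlyLE n i).eq_of_tgt _ _
  rw [← cancel_mono e.inv, zero_comp, ← hg, hg₀, Functor.map_zero]

lemma homotopyLE_shift {n : ℤ} {X : HomotopyCategory A (.up ℤ)} (hX : homotopyLE A n X)
    (a n' : ℤ) (h : a + n' = n) : homotopyLE A n' (X⟦a⟧) := by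
  obtain ⟨K, hK, ⟨e⟩⟩ := (ObjectProperty.prop_map_iff _ _ _).1 hX
  have : (K⟦a⟧).IsStrictlyLE n' := isStrictlyLE_shift K n a n' h
  exact (homotopyLE A n').prop_of_iso
    ((homotopyQ.commShiftIso a).app K ≪≫ (shiftFunctor _ a).mapIso e)
    (homotopyLE_quotient_obj n' (K⟦a⟧))

lemma leftOrthogonal_homotopyLE_shift {n : ℤ} {X : HomotopyCategory A (.up ℤ)}
    (hX : (homotopyLE A n).leftOrthogonal X) (a n' : ℤ) (h : a + n' = n) :
    (homotopyLE A n').leftOrthogonal (X⟦a⟧) := by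
  intro Y f hY
  apply (shiftFunctor _ (-a)).map_injective
  rw [Functor.map_zero, ← cancel_epi (shiftShiftNeg X a).inv, comp_zero]
  exact hX _ (homotopyLE_shift hY (-a) n (by lia))

variable [HasFiniteBiproducts A]

lemma isStrictlyLE_mappingCone {K L : CochainComplex A ℤ} (f : K ⟶ L) (n : ℤ)
    [K.IsStrictlyLE (n + 1)] [L.IsStrictlyLE n] : (mappingCone f).IsStrictlyLE n := by
  rw [isStrictlyLE_iff]
  intro i hi
  rw [mappingCone.isZero_X_iff]
  exact ⟨K.isZero_of_isStrictlyLE (n + 1) (i + 1), L.isZero_of_isStrictlyLE n i⟩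

variable [HasZeroObject A]

instance (n : ℤ) : (homotopyLE A n).ContainsZero where
  exists_zero := ⟨homotopyQ.obj 0, homotopyQ.map_isZero (isZero_zero _),
    homotopyLE_quotient_obj n 0⟩

lemma homotopyLE_cone {n : ℤ} {T : Triangle (HomotopyCategory A (.up ℤ))}
    (hT : T ∈ distTriang _) (h₁ : homotopyLE A (n + 1) T.obj₁) (h₂ : homotopyLE A n T.obj₂) :
    homotopyLE A n T.obj₃ := by
  obtain ⟨K, hK, ⟨e₁⟩⟩ := (ObjectProperty.prop_map_iff _ _ _).1 h₁
  obtain ⟨L, hL, ⟨e₂⟩⟩ := (ObjectProperty.prop_map_iff _ _ _).1 h₂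
  obtain ⟨f, hf⟩ := homotopyQ.map_surjective (e₁.hom ≫ T.mor₁ ≫ e₂.inv)
  have := isStrictlyLE_mappingCone f n
  have comm : homotopyQ.map f ≫ e₂.hom = e₁.hom ≫ T.mor₁ := by
    rw [hf, Category.assoc, Category.assoc, e₂.inv_hom_id, Category.comp_id]
  exact (homotopyLE A n).prop_of_iso
    (Triangle.π₃.mapIso (isoTriangleOfIso₁₂ _ T
      (HomotopyCategory.mappingCone_triangleh_distinguished f) hT e₁ e₂ comm))
    (homotopyLE_quotient_obj n (mappingCone f))

instance (n : ℤ) : (homotopyLE A n).IsTriangulatedClosed₂ :=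
  .mk' fun _ hT h₁ h₃ => homotopyLE_cone (inv_rot_of_distTriang _ hT)
    (homotopyLE_shift h₃ (-1) (n + 1) (by lia)) h₁

end BoundedAbove

section MappingCone

open CochainComplex HomComplex

variable {A : Type u} [Category.{v} A] [Preadditive A] [HasFiniteBiproducts A]
  {K L M : CochainComplex A ℤ} (φ : K ⟶ L) (α : Cochain K M (-1)) (β : L ⟶ M)
  (hαβ : δ (-1) 0 α = Cochain.ofHom (φ ≫ β))

lemma isIso_desc_f_of_isZero_source {i : ℤ} (hK : IsZero (K.X (i + 1))) [IsIso (β.f i)] :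
    IsIso ((mappingCone.desc φ α β hαβ).f i) := by
  refine ⟨inv (β.f i) ≫ (mappingCone.inr φ).f i, ?_, ?_⟩
  · exact mappingCone.ext_from φ (i + 1) i rfl (hK.eq_of_src _ _) (by simp)
  · simp

lemma isIso_desc_f_of_isZero_target {i : ℤ} (hL : IsZero (L.X i))
    [IsIso (α.v (i + 1) i (add_neg_cancel_right i 1))] :
    IsIso ((mappingCone.desc φ α β hαβ).f i) := by
  refine ⟨inv (α.v (i + 1) i (add_neg_cancel_right i 1)) ≫
    (mappingCone.inl φ).v (i + 1) i (add_neg_cancel_right i 1), ?_, ?_⟩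
  · exact mappingCone.ext_from φ (i + 1) i rfl (by simp) (hL.eq_of_src _ _)
  · simp

end MappingCone

section TwoComplex

open CochainComplex HomComplex

variable {A : Type u} [Category.{v} A] [Preadditive A] [HasZeroObject A] {P Q : A}

lemma twoComplex_isZero_X (n : ℤ) (s : P ⟶ Q) {i : ℤ} (hi : i ≠ n) (hi' : i ≠ n + 1) :
    IsZero ((twoComplex n s).X i) := by
  simpa only [twoComplex, if_neg hi, if_neg hi'] using isZero_zero A

lemma twoComplex_isStrictlyGE (n : ℤ) (s : P ⟶ Q) : (twoComplex n s).IsStrictlyGE n :=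
  (isStrictlyGE_iff _ _).2 fun _ _ => twoComplex_isZero_X n s (by lia) (by lia)

lemma twoComplex_isStrictlyLE (n : ℤ) (s : P ⟶ Q) : (twoComplex n s).IsStrictlyLE (n + 1) :=
  (isStrictlyLE_iff _ _).2 fun _ _ => twoComplex_isZero_X n s (by lia) (by lia)

lemma twoComplex_d (n : ℤ) (s : P ⟶ Q) {m : ℤ} (hm : m = n + 1) :
    (twoComplex n s).d n m =
      eqToHom (by simp [twoComplex]) ≫ s ≫ eqToHom (by simp [twoComplex, hm]) :=
  dif_pos ⟨rfl, hm⟩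

/-- The identification of `P` with the term of degree `-1` of the cone of `s : P ⟶ Q`. -/
noncomputable def twoComplexXNegOneIso (s : P ⟶ Q) : P ≅ (twoComplex (-1) s).X (-1) :=
  eqToIso (by simp [twoComplex])

/-- The identification of `Q` with the term of degree `0` of the cone of `s : P ⟶ Q`. -/
noncomputable def twoComplexXZeroIso (s : P ⟶ Q) : Q ≅ (twoComplex (-1) s).X 0 :=
  eqToIso (by simp [twoComplex])

lemma twoComplexXNegOneIso_hom_comp_d (s : P ⟶ Q) :
    (twoComplexXNegOneIso s).hom ≫ (twoComplex (-1) s).d (-1) 0 =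
      s ≫ (twoComplexXZeroIso s).hom := by
  rw [twoComplex_d (-1) s (neg_add_cancel 1).symm, twoComplexXNegOneIso, eqToIso.hom,
    eqToHom_trans_assoc, eqToHom_refl, Category.id_comp]
  rfl

variable [HasFiniteBiproducts A]

lemma exists_mappingCone_iso_twoComplex (s : P ⟶ Q) :
    Nonempty (mappingCone ((singleFunctor A 0).map s) ≅ twoComplex (-1) s) := by
  let α : Cochain ((singleFunctor A 0).obj P) (twoComplex (-1) s) (-1) :=
    Cochain.fromSingleMk (twoComplexXNegOneIso s).hom (zero_add (-1))
  let β : (singleFunctor A 0).obj Q ⟶ twoComplex (-1) s :=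
    (Cocycle.fromSingleMk (twoComplexXZeroIso s).hom (zero_add 0) 1 rfl
      ((twoComplex_isZero_X (-1) s (by lia) (by lia)).eq_of_tgt _ _)).homOf
  have hαβ : δ (-1) 0 α = Cochain.ofHom ((singleFunctor A 0).map s ≫ β) := by
    rw [Cochain.δ_fromSingleMk _ _ 0 0 (by lia), twoComplexXNegOneIso_hom_comp_d,
      Cochain.ofHom_comp, Cocycle.cochain_ofHom_homOf_eq_coe, Cocycle.fromSingleMk_coe,
      Cochain.fromSingleMk_precomp]
  have hα : IsIso (α.v (-1 + 1) (-1) (by lia)) := by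
    change IsIso (α.v 0 (-1) _)
    rw [Cochain.fromSingleMk_v]
    exact (HomologicalComplex.singleObjXSelf (.up ℤ) 0 P ≪≫ twoComplexXNegOneIso s).isIso_hom
  have hβ (i : ℤ) (hi : i ≠ -1) : IsIso (β.f i) := by
    obtain rfl | hi₀ := eq_or_ne i 0
    · rw [Cocycle.homOf_f, Cocycle.fromSingleMk_coe, Cochain.fromSingleMk_v]
      exact (HomologicalComplex.singleObjXSelf (.up ℤ) 0 Q ≪≫ twoComplexXZeroIso s).isIso_hom
    · exact ⟨0, (HomologicalComplex.isZero_single_obj_X _ _ _ _ hi₀).eq_of_src _ _,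
        (twoComplex_isZero_X (-1) s hi hi₀).eq_of_src _ _⟩
  have (i : ℤ) : IsIso ((mappingCone.desc _ α β hαβ).f i) := by
    obtain rfl | hi := eq_or_ne i (-1)
    · exact isIso_desc_f_of_isZero_target _ _ _ hαβ
        (HomologicalComplex.isZero_single_obj_X _ _ _ _ (by lia))
    · have := hβ i hi
      exact isIso_desc_f_of_isZero_source _ _ _ hαβ
        (HomologicalComplex.isZero_single_obj_X _ _ _ _ (by lia))
  have := HomologicalComplex.Hom.isIso_of_components (mappingCone.desc _ α β hαβ)
  exact ⟨asIso (mappingCone.desc _ α β hαβ)⟩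

lemma exists_distinguished_triangle_twoComplex (s : P ⟶ Q) :
    ∃ (g : iotaA.obj Q ⟶ homotopyQ.obj (twoComplex (-1) s))
      (h : homotopyQ.obj (twoComplex (-1) s) ⟶ (iotaA.obj P)⟦(1 : ℤ)⟧),
      Triangle.mk (iotaA.map s) g h ∈ distTriang (HomotopyCategory A (.up ℤ)) := by
  obtain ⟨e⟩ := exists_mappingCone_iso_twoComplex s
  have hT := HomotopyCategory.mappingCone_triangleh_distinguished ((singleFunctor A 0).map s)
  let T := mappingCone.triangleh ((singleFunctor A 0).map s)
  let e' : T.obj₃ ≅ homotopyQ.obj (twoComplex (-1) s) := homotopyQ.mapIso e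
  refine ⟨T.mor₂ ≫ e'.hom, e'.inv ≫ T.mor₃, isomorphic_distinguished _ hT _ ?_⟩
  refine Triangle.isoMk _ _ (Iso.refl _) (Iso.refl _) e'.symm ?_ ?_ ?_
  · exact (Category.comp_id _).trans (Category.id_comp _).symm
  · refine Eq.trans ?_ (Category.id_comp _).symm
    change (T.mor₂ ≫ e'.hom) ≫ e'.inv = T.mor₂
    rw [Category.assoc, e'.hom_inv_id, Category.comp_id]
  · change (e'.inv ≫ T.mor₃) ≫ (CategoryTheory.shiftFunctor _ (1 : ℤ)).map (𝟙 T.obj₁) =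
      e'.inv ≫ T.mor₃
    rw [CategoryTheory.Functor.map_id, Category.comp_id]

end TwoComplex

section WeightDecomposition

open CochainComplex hiding shiftFunctor

variable {A : Type u} [Category.{v} A] [Preadditive A] [HasZeroObject A] [HasFiniteBiproducts A]

/-- The objects `D` of the homotopy category which admit, for every `n`, a weight decomposition
inside `Q`: a distinguished triangle `D' ⟶ D ⟶ D'' ⟶ D'⟦1⟧` such that `D'` has no nonzero
morphism to a complex concentrated in degrees `≤ n`, and `D''` belongs to `Q` and is isomorphic to
a complex concentrated in degrees `≤ n + 1`. -/
def weightDecomposable (Q : ObjectProperty (HomotopyCategory A (.up ℤ))) :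
    ObjectProperty (HomotopyCategory A (.up ℤ)) := fun D =>
  ∀ n : ℤ, (homotopyLE A n).leftOrthogonal.extensionProduct (Q ⊓ homotopyLE A (n + 1)) D

variable (Q : ObjectProperty (HomotopyCategory A (.up ℤ)))

instance : (weightDecomposable Q).IsClosedUnderIsomorphisms where
  of_iso e h n := ObjectProperty.prop_of_iso _ e (h n)

variable [Q.IsTriangulated] [Q.IsClosedUnderIsomorphisms]

instance : (weightDecomposable Q).IsTriangulated where
  exists_zero := ⟨0, isZero_zero _, fun n =>
    ObjectProperty.le_extensionProduct_left _ _ (ObjectProperty.prop_zero _)⟩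
  isStableUnderShiftBy a := ⟨fun D hD n => by
    obtain ⟨_, _, _, _, _, hT, h₁, h₃, h₃'⟩ := hD (a + n)
    exact ⟨_, _, _, _, _, Triangle.shift_distinguished _ hT a,
      leftOrthogonal_homotopyLE_shift h₁ a n rfl, Q.le_shift a _ h₃,
      homotopyLE_shift h₃' a (n + 1) (by lia)⟩⟩
  toIsTriangulatedClosed₂ := .mk' fun T hT h₁ h₃ n => by
    have := extensionProduct_isTriangulatedClosed₂ (P := (homotopyLE A n).leftOrthogonal)
      (Q := Q ⊓ homotopyLE A (n + 1))
      fun _ _ hX hY f => hX f (homotopyLE_shift hY.2 1 n (by lia))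
    exact ObjectProperty.ext_of_isTriangulatedClosed₂ _ T hT (h₁ n) (h₃ n)

lemma genSubcat_coneSet_le_weightDecomposable (S : MorphismProperty A) :
    genSubcat (coneSet S) ≤ weightDecomposable (genSubcat (coneSet S)) := by
  refine genSubcat_le ?_
  rintro _ ⟨P, Q, s, hs, rfl⟩ n
  obtain hn | hn := lt_or_ge n (-1)
  · have := twoComplex_isStrictlyGE (-1) s
    exact ObjectProperty.le_extensionProduct_left _ _
      (leftOrthogonal_homotopyLE_quotient_obj hn _)
  · have := twoComplex_isStrictlyLE (-1) s
    have := isStrictlyLE_of_le (twoComplex (-1) s) (-1 + 1) (n + 1) (by lia)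
    exact ObjectProperty.le_extensionProduct_right _ _
      ⟨genSubcat_of_mem ⟨P, Q, s, hs, rfl⟩, homotopyLE_quotient_obj (n + 1) _⟩

end WeightDecomposition

section HomOfCycle

open CochainComplex HomComplex

variable {A : Type u} [Category.{v} A] [Preadditive A] [HasZeroObject A] {K : CochainComplex A ℤ}

/-- The morphism in the homotopy category from an object `X`, placed in degree `0`, to a complex `K`
which is given by a cycle `f : X ⟶ K.X 0`. -/
noncomputable def homOfCycle {X : A} (f : X ⟶ K.X 0) (hf : f ≫ K.d 0 1 = 0) :
    iotaA.obj X ⟶ homotopyQ.obj K :=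
  homotopyQ.map (Cocycle.fromSingleMk f (zero_add 0) 1 (zero_add 1) hf).homOf

lemma homOfCycle_surjective {X : A} (φ : iotaA.obj X ⟶ homotopyQ.obj K) :
    ∃ (f : X ⟶ K.X 0) (hf : f ≫ K.d 0 1 = 0), homOfCycle f hf = φ := by
  obtain ⟨φ, rfl⟩ := homotopyQ.map_surjective φ
  obtain ⟨f, hf, hfφ⟩ := Cocycle.fromSingleMk_surjective (Cocycle.ofHom φ) 0 (zero_add 0) 1
    (zero_add 1)
  exact ⟨f, hf, congrArg homotopyQ.map
    ((congrArg Cocycle.homOf hfφ).trans (Cocycle.homOf_ofHom_eq_self φ))⟩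

lemma iotaA_map_comp_homOfCycle {X Y : A} (g : X ⟶ Y) (f : Y ⟶ K.X 0) (hf : f ≫ K.d 0 1 = 0) :
    iotaA.map g ≫ homOfCycle f hf =
      homOfCycle (g ≫ f) (by rw [Category.assoc, hf, comp_zero]) := by
  have comm : (singleFunctor A 0).map g ≫
      (Cocycle.fromSingleMk f (zero_add 0) 1 (zero_add 1) hf).homOf =
      (Cocycle.fromSingleMk (g ≫ f) (zero_add 0) 1 (zero_add 1)
        (by rw [Category.assoc, hf, comp_zero])).homOf :=
    Cochain.ofHom_injective (by simp only [Cochain.ofHom_comp, Cocycle.cochain_ofHom_homOf_eq_coe,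
      Cocycle.fromSingleMk_coe, Cochain.fromSingleMk_precomp])
  exact (homotopyQ.map_comp _ _).symm.trans (congrArg homotopyQ.map comm)

lemma homOfCycle_eq_zero_iff {X : A} (f : X ⟶ K.X 0) (hf : f ≫ K.d 0 1 = 0) :
    homOfCycle f hf = 0 ↔ ∃ g : X ⟶ K.X (-1), g ≫ K.d (-1) 0 = f := by
  have key : Nonempty (Homotopy (Cocycle.fromSingleMk f (zero_add 0) 1 (zero_add 1) hf).homOf 0) ↔
      ∃ g : X ⟶ K.X (-1), g ≫ K.d (-1) 0 = f := by
    rw [(Cochain.equivHomotopy _ _).nonempty_congr, nonempty_subtype,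
      ← Cocycle.fromSingleMk_mem_coboundaries_iff f (zero_add 0) 1 (zero_add 1) hf (-1) (by lia),
      mem_coboundaries_iff _ (-1) (by lia)]
    simp only [Cochain.ofHom_zero, add_zero, Cocycle.cochain_ofHom_homOf_eq_coe, eq_comm]
  exact (HomotopyCategory.quotient_map_eq_zero_iff _).trans key

instance : (iotaA (A := A)).Faithful where
  map_injective {X Y f g} hfg := by
    let e := (HomologicalComplex.singleObjXSelf (.up ℤ) 0 Y).inv
    have he : e ≫ ((HomologicalComplex.single A (.up ℤ) 0).obj Y).d 0 1 = 0 := by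
      rw [HomologicalComplex.single_obj_d, comp_zero]
    have hzero : homOfCycle ((f - g) ≫ e) (by rw [Category.assoc, he, comp_zero]) = 0 := by
      rw [← iotaA_map_comp_homOfCycle (f - g) e he, Functor.map_sub, hfg, sub_self, zero_comp]
    obtain ⟨h, hh⟩ := (homOfCycle_eq_zero_iff _ _).1 hzero
    rw [HomologicalComplex.single_obj_d, comp_zero] at hh
    exact sub_eq_zero.1 ((cancel_mono e).1 (hh.symm.trans zero_comp.symm))

lemma isSplitEpi_d_of_isZero_quotient_obj (hd : K.d 0 1 = 0) (hK : IsZero (homotopyQ.obj K)) :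
    IsSplitEpi (K.d (-1) 0) := by
  obtain ⟨h, hh⟩ := (homOfCycle_eq_zero_iff (𝟙 (K.X 0)) (by rw [hd, comp_zero])).1
    (hK.eq_of_tgt _ _)
  exact ⟨⟨h, hh⟩⟩

end HomOfCycle

section MapHomotopyCategory

variable {A : Type u} [Category.{v} A] [Preadditive A] {A' : Type u'} [Category.{v'} A']
  [Preadditive A'] (F : A ⥤ A') [F.Additive]

lemma isSplitEpi_map_d (K : CochainComplex A ℤ) (hd : K.d 0 1 = 0) [HasZeroObject A']
    (hK : IsZero ((F.mapHomotopyCategory (.up ℤ)).obj (homotopyQ.obj K))) :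
    IsSplitEpi (F.map (K.d (-1) 0)) :=
  isSplitEpi_d_of_isZero_quotient_obj (K := (F.mapHomologicalComplex (.up ℤ)).obj K)
    ((congrArg F.map hd).trans (F.map_zero _ _))
    (hK.of_iso ((F.mapHomotopyCategoryFactors _).symm.app K))

variable [HasZeroObject A] [HasZeroObject A']

/-- The embeddings of `A` and `A'` into their homotopy categories are compatible with an additive
functor `F : A ⥤ A'`. -/
noncomputable def iotaACompMapHomotopyCategory :
    iotaA ⋙ F.mapHomotopyCategory (.up ℤ) ≅ F ⋙ iotaA :=
  Functor.associator _ _ _ ≪≫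
    Functor.isoWhiskerLeft _ (F.mapHomotopyCategoryFactors (.up ℤ)) ≪≫
    (Functor.associator _ _ _).symm ≪≫
    Functor.isoWhiskerRight (HomologicalComplex.singleMapHomologicalComplex F (.up ℤ) 0) _ ≪≫
    Functor.associator _ _ _

variable [HasFiniteBiproducts A] [HasFiniteBiproducts A'] {F} {S : MorphismProperty A}

lemma isZero_map_of_mem_coneSet (hF : S.IsInvertedBy F) {X : HomotopyCategory A (.up ℤ)}
    (hX : X ∈ coneSet S) : IsZero ((F.mapHomotopyCategory (.up ℤ)).obj X) := by
  obtain ⟨P, Q, s, hs, rfl⟩ := hX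
  obtain ⟨g, h, hT⟩ := exists_distinguished_triangle_twoComplex s
  have := hF s hs
  have hs' : IsIso ((iotaA ⋙ F.mapHomotopyCategory (.up ℤ)).map s) :=
    (NatIso.isIso_map_iff (iotaACompMapHomotopyCategory F) s).2
      (inferInstanceAs (IsIso (iotaA.map (F.map s))))
  exact Triangle.isZero₃_of_isIso₁ _ ((F.mapHomotopyCategory (.up ℤ)).map_distinguished _ hT) hs'

lemma trW_coneSet_isInvertedBy_mapHomotopyCategory (hF : S.IsInvertedBy F) :
    (genSubcat (coneSet S)).trW.IsInvertedBy (F.mapHomotopyCategory (.up ℤ)) :=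
  trW_genSubcat_isInvertedBy fun _ => isZero_map_of_mem_coneSet hF

lemma isSplitEpi_map_d_of_genSubcat (hF : S.IsInvertedBy F) (K : CochainComplex A ℤ)
    (hd : K.d 0 1 = 0) (hK : genSubcat (coneSet S) (homotopyQ.obj K)) :
    IsSplitEpi (F.map (K.d (-1) 0)) :=
  isSplitEpi_map_d F K hd
    (isZero_obj_of_genSubcat (fun _ => isZero_map_of_mem_coneSet hF) hK)

end MapHomotopyCategory

section Generation

variable {A : Type u} [Category.{v} A] [Preadditive A] [HasZeroObject A]

lemma homotopyLE_iotaA_obj_shift (X : A) :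
    homotopyLE A (-1) ((iotaA.obj X)⟦(1 : ℤ)⟧) :=
  homotopyLE_shift
    (homotopyLE_quotient_obj 0 ((HomologicalComplex.single A (.up ℤ) 0).obj X)) 1 (-1) (by lia)

lemma leftOrthogonal_iotaA_obj (X : A) :
    (homotopyLE A (-1)).leftOrthogonal (iotaA.obj X) :=
  leftOrthogonal_homotopyLE_quotient_obj (by lia : (-1 : ℤ) < 0)
    ((HomologicalComplex.single A (.up ℤ) 0).obj X)

variable [HasFiniteBiproducts A] {S : MorphismProperty A}

lemma isIso_uBig_map {X Y : A} {s : X ⟶ Y} (hs : S s) : IsIso ((uBig S).map s) := by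
  obtain ⟨g, h, hT⟩ := exists_distinguished_triangle_twoComplex s
  exact Localization.inverts (locQ S) (genSubcat (coneSet S)).trW _
    ⟨_, g, h, hT, genSubcat_of_mem ⟨_, _, s, hs, rfl⟩⟩

lemma isIso_uFun_map {X Y : A} {s : X ⟶ Y} (hs : S s) : IsIso ((uFun S).map s) := by
  obtain ⟨t, hst, hts⟩ := isIso_uBig_map hs
  exact ⟨t, hst, hts⟩

instance : (uFun S).Additive where
  map_add := (uBig S).map_add

lemma exists_comp_distinguished_of_trW {Y : A} {Z : HomotopyCategory A (.up ℤ)}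
    (s : iotaA.obj Y ⟶ Z) (hs : (genSubcat (coneSet S)).trW s) :
    ∃ (K : CochainComplex A ℤ) (_ : K.IsStrictlyLE 0)
      (_ : genSubcat (coneSet S) (homotopyQ.obj K))
      (Z' : HomotopyCategory A (.up ℤ)) (t : Z ⟶ Z') (p : Z' ⟶ homotopyQ.obj K)
      (δ : homotopyQ.obj K ⟶ (iotaA.obj Y)⟦(1 : ℤ)⟧),
      Triangle.mk (s ≫ t) p δ ∈ distTriang (HomotopyCategory A (.up ℤ)) := by
  obtain ⟨D, g, h, hT, hD⟩ := hs
  obtain ⟨D', D'', a, b, c, hDT, hD', hDgen, K, hK, ⟨e⟩⟩ :=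
    genSubcat_coneSet_le_weightDecomposable S D hD (-1)
  obtain ⟨δ : D'' ⟶ (iotaA.obj Y)⟦(1 : ℤ)⟧, rfl : h = b ≫ δ⟩ :=
    Triangle.yoneda_exact₂ _ hDT h (hD' _ (homotopyLE_iotaA_obj_shift Y))
  obtain ⟨Z', s', p, hT'⟩ := distinguished_cocone_triangle₂ (e.hom ≫ δ)
  have comm : (b ≫ δ) ≫ (𝟙 (iotaA.obj Y))⟦(1 : ℤ)⟧' = (b ≫ e.inv) ≫ e.hom ≫ δ := by
    rw [(shiftFunctor _ (1 : ℤ)).map_id, Category.comp_id, Category.assoc, e.inv_hom_id_assoc]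
  obtain ⟨t, ht, -⟩ := complete_distinguished_triangle_morphism₂ _ _ hT hT' (𝟙 _) (b ≫ e.inv) comm
  have hst : s ≫ t = s' := ht.trans (Category.id_comp _)
  exact ⟨K, hK, ObjectProperty.prop_of_iso _ e.symm hDgen, Z', t, p, _, hst ▸ hT'⟩

lemma exists_eq_iotaA_map_comp_add {X Y : A} {K : CochainComplex A ℤ} [K.IsStrictlyLE 0]
    {Z : HomotopyCategory A (.up ℤ)} {s : iotaA.obj Y ⟶ Z} {p : Z ⟶ homotopyQ.obj K}
    {δ : homotopyQ.obj K ⟶ (iotaA.obj Y)⟦(1 : ℤ)⟧} (hT : Triangle.mk s p δ ∈ distTriang _)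
    (φ : iotaA.obj X ⟶ Z) :
    ∃ (f : X ⟶ Y) (g : X ⟶ K.X 0) (e : K.X (-1) ⟶ Y) (j : iotaA.obj (K.X 0) ⟶ Z),
      iotaA.map (K.d (-1) 0) ≫ j = iotaA.map e ≫ s ∧
        φ = iotaA.map f ≫ s + iotaA.map g ≫ j := by
  have hd : K.d 0 1 = 0 := (K.isZero_of_isStrictlyLE 0 1).eq_of_tgt _ _
  let k : iotaA.obj (K.X 0) ⟶ homotopyQ.obj K := homOfCycle (𝟙 _) (by rw [hd, comp_zero])
  obtain ⟨j : iotaA.obj (K.X 0) ⟶ Z, hj : k = j ≫ p⟩ := Triangle.coyoneda_exact₃ _ hT k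
    (leftOrthogonal_iotaA_obj _ _ (homotopyLE_iotaA_obj_shift Y))
  obtain ⟨g, hg, hgp⟩ := homOfCycle_surjective (φ ≫ p)
  have hdk : iotaA.map (K.d (-1) 0) ≫ k = 0 :=
    (iotaA_map_comp_homOfCycle _ _ _).trans ((homOfCycle_eq_zero_iff _ _).2 ⟨𝟙 _, by simp⟩)
  have hgk : iotaA.map g ≫ k = φ ≫ p := by
    rw [← hgp, iotaA_map_comp_homOfCycle]
    simp only [Category.comp_id]
  obtain ⟨f', hf'⟩ := Triangle.coyoneda_exact₂ _ hT (φ - iotaA.map g ≫ j) (by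
    change (φ - iotaA.map g ≫ j) ≫ p = 0
    rw [Preadditive.sub_comp, Category.assoc, ← hj, hgk, sub_self])
  obtain ⟨e', he'⟩ := Triangle.coyoneda_exact₂ _ hT (iotaA.map (K.d (-1) 0) ≫ j) (by
    change (iotaA.map (K.d (-1) 0) ≫ j) ≫ p = 0
    rw [Category.assoc, ← hj, hdk])
  obtain ⟨f, rfl⟩ := iotaA.map_surjective f'
  obtain ⟨e, rfl⟩ := iotaA.map_surjective e'
  exact ⟨f, g, e, j, he', sub_eq_iff_eq_add.1 hf'⟩

lemma exists_eq_uBig_map_add {X Y : A} (α : (uBig S).obj X ⟶ (uBig S).obj Y) :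
    ∃ (K : CochainComplex A ℤ) (_ : K.IsStrictlyLE 0)
      (_ : genSubcat (coneSet S) (homotopyQ.obj K)) (f : X ⟶ Y) (g : X ⟶ K.X 0)
      (e : K.X (-1) ⟶ Y) (β : (uBig S).obj (K.X 0) ⟶ (uBig S).obj Y),
      (uBig S).map (K.d (-1) 0) ≫ β = (uBig S).map e ∧
        α = (uBig S).map f + (uBig S).map g ≫ β := by
  obtain ⟨φ, hφ⟩ := Localization.exists_leftFraction (locQ S) (genSubcat (coneSet S)).trW α
  obtain ⟨K, hK, hKgen, Z, t, p, δ, hT⟩ := exists_comp_distinguished_of_trW φ.s φ.hs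
  have : IsIso ((locQ S).map (φ.s ≫ t)) :=
    Localization.inverts (locQ S) (genSubcat (coneSet S)).trW _ ⟨_, p, δ, hT, hKgen⟩
  have hα : α ≫ (locQ S).map (φ.s ≫ t) = (locQ S).map (φ.f ≫ t) := by
    rw [hφ, Functor.map_comp, Functor.map_comp,
      MorphismProperty.LeftFraction.map_comp_map_s_assoc]
  obtain ⟨f, g, e, j, hej, hfg⟩ := exists_eq_iotaA_map_comp_add hT (φ.f ≫ t)
  refine ⟨K, hK, hKgen, f, g, e, (locQ S).map j ≫ inv ((locQ S).map (φ.s ≫ t)), ?_, ?_⟩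
  · rw [← Category.assoc, IsIso.comp_inv_eq]
    exact ((locQ S).map_comp _ _).symm.trans
      ((congrArg (locQ S).map hej).trans ((locQ S).map_comp _ _))
  · rw [← cancel_mono ((locQ S).map (φ.s ≫ t)), hα, hfg, (locQ S).map_add,
      (locQ S).map_comp (iotaA.map f), (locQ S).map_comp (iotaA.map g), Preadditive.add_comp,
      Category.assoc, Category.assoc, IsIso.inv_hom_id,
      Category.comp_id]
    rfl

end Generation

section Uniqueness

variable {A : Type u} [Category.{v} A] [Preadditive A] [HasZeroObject A] [HasFiniteBiproducts A]
  {S : MorphismProperty A} {A' : Type u'} [Category.{v'} A']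

lemma isInvertedBy_uFun_comp (G : AddLoc S ⥤ A') : S.IsInvertedBy (uFun S ⋙ G) := fun _ _ _ hs =>
  have := isIso_uFun_map hs
  inferInstanceAs (IsIso (G.map _))

variable [Preadditive A'] [HasFiniteBiproducts A'] {G₁ G₂ : AddLoc S ⥤ A'} [G₁.Additive]
  [G₂.Additive]

/- Both sides agree after precomposition with the split epimorphism `G₁.map ((uFun S).map d)`, where
`d` is the last differential of the complex from `exists_eq_uBig_map_add`. -/
lemma naturality_of_uFun_comp (τ : uFun S ⋙ G₁ ⟶ uFun S ⋙ G₂) {X Y : A}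
    (α : (uFun S).obj X ⟶ (uFun S).obj Y) :
    G₁.map α ≫ τ.app Y = τ.app X ≫ G₂.map α := by
  obtain ⟨K, hK, hKgen, f, g, e, β, hβ, hα⟩ := exists_eq_uBig_map_add (X := X) (Y := Y) α
  have := hasZeroObject_of_hasFiniteBiproducts A'
  have hd : K.d 0 1 = 0 := (K.isZero_of_isStrictlyLE 0 1).eq_of_tgt _ _
  have := isSplitEpi_map_d_of_genSubcat (isInvertedBy_uFun_comp G₁) K hd hKgen
  let γ (G : AddLoc S ⥤ A') : (uFun S ⋙ G).obj (K.X 0) ⟶ (uFun S ⋙ G).obj Y := G.map β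
  have hγ (G : AddLoc S ⥤ A') : (uFun S ⋙ G).map (K.d (-1) 0) ≫ γ G = (uFun S ⋙ G).map e :=
    (G.map_comp _ _).symm.trans (congrArg G.map hβ)
  have map_α (G : AddLoc S ⥤ A') [G.Additive] :
      G.map α = (uFun S ⋙ G).map f + (uFun S ⋙ G).map g ≫ γ G :=
    (congrArg G.map hα).trans (G.map_add.trans (congrArg _ (G.map_comp _ _)))
  have hγτ : γ G₁ ≫ τ.app Y = τ.app (K.X 0) ≫ γ G₂ := by
    rw [← cancel_epi ((uFun S ⋙ G₁).map (K.d (-1) 0)), ← Category.assoc, hγ, τ.naturality_assoc,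
      hγ, τ.naturality]
  rw [map_α G₁, map_α G₂, Preadditive.add_comp, Preadditive.comp_add, Category.assoc, hγτ,
    τ.naturality, τ.naturality_assoc]

lemma eq_of_uFun_comp_eq (h : uFun S ⋙ G₁ = uFun S ⋙ G₂) : G₁ = G₂ := by
  have hobj (X : AddLoc S) : G₁.obj X = G₂.obj X := Functor.congr_obj h X
  refine CategoryTheory.Functor.ext hobj fun X Y α => ?_
  have nat : G₁.map α ≫ eqToHom (hobj Y) = eqToHom (hobj X) ≫ G₂.map α := by
    have happ (Z : A) : (eqToHom h).app Z = eqToHom (hobj Z) := eqToHom_app h Z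
    rw [← happ X, ← happ Y]
    exact naturality_of_uFun_comp (eqToHom h) α
  rw [← reassoc_of% nat, eqToHom_trans, eqToHom_refl, Category.comp_id]

end Uniqueness

section Existence

variable {A : Type u} [Category.{v} A] [Preadditive A] [HasZeroObject A] [HasFiniteBiproducts A]
  {S : MorphismProperty A} {A' : Type u'} [Category.{v'} A'] [Preadditive A'] [HasZeroObject A']
  [HasFiniteBiproducts A'] {F : A ⥤ A'} [F.Additive] (hF : S.IsInvertedBy F)

/-- The functor from the Verdier quotient to the homotopy category of `A'` induced by an additive
functor `F : A ⥤ A'` which inverts `S`. -/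
noncomputable def verdierLift :
    (genSubcat (coneSet S)).trW.Localization ⥤ HomotopyCategory A' (.up ℤ) :=
  Localization.lift (F.mapHomotopyCategory (.up ℤ))
    (trW_coneSet_isInvertedBy_mapHomotopyCategory hF) (locQ S)

/-- The functor induced on the Verdier quotient extends the functor which applies `F` degreewise. -/
noncomputable def locQCompVerdierLift :
    locQ S ⋙ verdierLift hF ≅ F.mapHomotopyCategory (.up ℤ) :=
  Localization.fac _ _ _

instance : (verdierLift hF).Additive := by
  rw [Localization.functor_additive_iff (locQ S) (genSubcat (coneSet S)).trW]
  exact Functor.additive_of_iso (locQCompVerdierLift hF).symm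

/-- The functor induced on the Verdier quotient restricts to `F` on objects of `A`. -/
noncomputable def uBigCompVerdierLift : uBig S ⋙ verdierLift hF ≅ F ⋙ iotaA :=
  Functor.associator _ _ _ ≪≫ Functor.isoWhiskerLeft iotaA (locQCompVerdierLift hF) ≪≫
    iotaACompMapHomotopyCategory F

/-- The action on morphisms of the functor `addLocLift`, obtained from `verdierLift` since the
embedding of `A'` into its homotopy category is fully faithful. -/
noncomputable def addLocLiftMap {X Y : A} (α : (uBig S).obj X ⟶ (uBig S).obj Y) :
    F.obj X ⟶ F.obj Y :=
  iotaA.preimage ((uBigCompVerdierLift hF).inv.app X ≫ (verdierLift hF).map α ≫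
    (uBigCompVerdierLift hF).hom.app Y)

lemma iotaA_map_addLocLiftMap {X Y : A} (α : (uBig S).obj X ⟶ (uBig S).obj Y) :
    iotaA.map (addLocLiftMap hF α) = (uBigCompVerdierLift hF).inv.app X ≫
      (verdierLift hF).map α ≫ (uBigCompVerdierLift hF).hom.app Y :=
  iotaA.map_preimage _

lemma addLocLiftMap_uBig_map {X Y : A} (f : X ⟶ Y) :
    addLocLiftMap hF ((uBig S).map f) = F.map f :=
  iotaA.map_injective ((iotaA_map_addLocLiftMap hF _).trans
    (NatIso.naturality_1 (uBigCompVerdierLift hF) f))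

lemma addLocLiftMap_comp {X Y Z : A} (α : (uBig S).obj X ⟶ (uBig S).obj Y)
    (β : (uBig S).obj Y ⟶ (uBig S).obj Z) :
    addLocLiftMap hF (α ≫ β) = addLocLiftMap hF α ≫ addLocLiftMap hF β := by
  apply iotaA.map_injective
  rw [iotaA.map_comp]
  simp only [iotaA_map_addLocLiftMap, Functor.map_comp, Category.assoc]
  rw [Iso.hom_inv_id_app_assoc]

lemma addLocLiftMap_add {X Y : A} (α β : (uBig S).obj X ⟶ (uBig S).obj Y) :
    addLocLiftMap hF (α + β) = addLocLiftMap hF α + addLocLiftMap hF β := by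
  apply iotaA.map_injective
  simp only [iotaA_map_addLocLiftMap, Functor.map_add, Preadditive.add_comp, Preadditive.comp_add]

/-- The additive functor `A[S⁻¹]_add ⥤ A'` through which an additive functor `F : A ⥤ A'` inverting
`S` factors. -/
noncomputable def addLocLift : AddLoc S ⥤ A' where
  obj X := F.obj X
  map {X Y} α := addLocLiftMap hF (X := X) (Y := Y) α
  map_id X := (congrArg _ ((uBig S).map_id X).symm).trans
    ((addLocLiftMap_uBig_map hF _).trans (F.map_id X))
  map_comp {X Y Z} := addLocLiftMap_comp hF (X := X) (Y := Y) (Z := Z)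

instance : (addLocLift hF).Additive where
  map_add {X Y} := addLocLiftMap_add hF (X := X) (Y := Y) _ _

lemma uFun_comp_addLocLift : uFun S ⋙ addLocLift hF = F :=
  CategoryTheory.Functor.ext (fun _ => rfl) fun _ _ f =>
    (addLocLiftMap_uBig_map hF f).trans
      ((Category.id_comp _).trans (Category.comp_id _)).symm

end Existence

/-- Theorem: `u : A ⥤ A[S⁻¹]_add` is the universal additive functor making the
elements of `S` invertible: an additive functor `F : A ⥤ A'` factors through `u` if and
only if it sends every element of `S` to an isomorphism, and in that case the
factorization is unique. -/
theorem statement0 {A : Type u} [Category.{v} A] [Preadditive A] [HasZeroObject A]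
    [HasFiniteBiproducts A] (S : MorphismProperty A)
    {A' : Type u'} [Category.{v'} A'] [Preadditive A'] [HasFiniteBiproducts A']
    (F : A ⥤ A') [F.Additive] :
    ((∃ G : AddLoc S ⥤ A', G.Additive ∧ uFun S ⋙ G = F) ↔
      ∀ ⦃X Y : A⦄ (s : X ⟶ Y), S s → IsIso (F.map s)) ∧
    ((∀ ⦃X Y : A⦄ (s : X ⟶ Y), S s → IsIso (F.map s)) →
      ∃! G : AddLoc S ⥤ A', G.Additive ∧ uFun S ⋙ G = F) := by
  have := hasZeroObject_of_hasFiniteBiproducts A'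
  have existence (hF : S.IsInvertedBy F) : ∃ G : AddLoc S ⥤ A', G.Additive ∧ uFun S ⋙ G = F :=
    ⟨addLocLift hF, inferInstance, uFun_comp_addLocLift hF⟩
  refine ⟨⟨?_, existence⟩, fun hF => existsUnique_of_exists_of_unique (existence hF) ?_⟩
  · rintro ⟨G, -, rfl⟩
    exact isInvertedBy_uFun_comp G
  · rintro G₁ G₂ ⟨_, h₁⟩ ⟨_, h₂⟩
    exact eq_of_uFun_comp_eq (h₁.trans h₂.symm)
end

section
/- Suppose A is an additive category and S is a class of morphisms of A containing the identity morphisms of all objects of A and closed under direct sums (if s, s' ∈ S then s ⊕ s' ∈ S). Then the Gabriel–Zisman localization A[S⁻¹] is an additive category, and the localization functor A → A[S⁻¹] is an additive functor. -/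
open CategoryTheory Limits Pretriangulated ZeroObject

universe v u v' u'

attribute [local instance] Limits.hasBinaryBiproducts_of_finite_biproducts

/-!
Products alone carry the argument. The morphisms inverted by the localization functor `L : A ⥤ D`
are closed under finite products, so `D` has finite products and `L` preserves them. Being additive,
`A` consists of commutative group objects; applying `L` to these gives a functor `A ⥤ CommGrp D`,
which inverts `S` and hence descends to a section of the forgetful functor `CommGrp D ⥤ D`. This
section is fully faithful and `CommGrp D` is preadditive, so `D` is preadditive too, and in a
preadditive category finite products are biproducts.
-/

open MorphismProperty

section Products

variable {C : Type u} [Category.{v} C]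

lemma isStableUnderProductsOfShape_pempty (W : MorphismProperty C) [W.RespectsIso]
    [W.ContainsIdentities] : W.IsStableUnderProductsOfShape PEmpty.{1} :=
  .mk _ _ fun _ _ _ _ f _ =>
    have : IsIso (Limits.Pi.map f) :=
      ⟨Limits.Pi.map fun j => j.elim, by ext j; exact j.elim, by ext j; exact j.elim⟩
    W.of_isIso _

lemma isStableUnderProductsOfShape_walkingPair_of_prod_map [HasBinaryProducts C]
    (W : MorphismProperty C) [W.RespectsIso]
    (hW : ∀ ⦃X Y X' Y' : C⦄ (f : X ⟶ Y) (g : X' ⟶ Y'), W f → W g → W (prod.map f g)) :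
    W.IsStableUnderProductsOfShape WalkingPair :=
  .mk _ _ fun X₁ X₂ _ _ f hf => by
    let e (X : WalkingPair → C) [HasProduct X] : ∏ᶜ X ≅ X .left ⨯ X .right :=
      HasLimit.isoOfNatIso (diagramIsoPair (Discrete.functor X))
    have e_fst (X : WalkingPair → C) [HasProduct X] :
        (e X).hom ≫ prod.fst = Limits.Pi.π X .left :=
      (HasLimit.isoOfNatIso_hom_π (diagramIsoPair _) ⟨.left⟩).trans (Category.comp_id _)
    have e_snd (X : WalkingPair → C) [HasProduct X] :
        (e X).hom ≫ prod.snd = Limits.Pi.π X .right :=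
      (HasLimit.isoOfNatIso_hom_π (diagramIsoPair _) ⟨.right⟩).trans (Category.comp_id _)
    have e_comm : (e X₁).hom ≫ prod.map (f .left) (f .right) = Limits.Pi.map f ≫ (e X₂).hom := by
      ext
      · simp [e_fst, reassoc_of% e_fst]
      · simp [e_snd, reassoc_of% e_snd]
    exact (W.arrow_mk_iso_iff (Arrow.isoMk (e X₁) (e X₂) e_comm)).2 (hW _ _ (hf _) (hf _))

lemma prod_map_eq_isoProd_conj_biprod_map [HasZeroMorphisms C] [HasBinaryBiproducts C]
    {X Y X' Y' : C} (f : X ⟶ Y) (g : X' ⟶ Y') :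
    prod.map f g = (biprod.isoProd X X').inv ≫ biprod.map f g ≫ (biprod.isoProd Y Y').hom := by
  rw [Iso.eq_inv_comp]
  ext <;> simp

lemma prod_map_eq_comp_braiding_conj [HasBinaryProducts C] {X Y X' Y' : C} (f : X ⟶ Y)
    (g : X' ⟶ Y') :
    prod.map f g = prod.map f (𝟙 X') ≫
      (prod.braiding X' Y).inv ≫ prod.map g (𝟙 Y) ≫ (prod.braiding Y' Y).hom := by
  rw [braid_natural, Iso.inv_hom_id_assoc, prod.map_map, Category.comp_id, Category.id_comp]

end Products

section LocalizationProducts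

variable {C : Type u} [Category.{v} C] {D : Type u'} [Category.{v'} D] (L : C ⥤ D)
  (W : MorphismProperty C) [L.IsLocalization W]

include W in
lemma isLocalization_inverseImage_isomorphisms :
    L.IsLocalization ((isomorphisms D).inverseImage L) :=
  .of_equivalence_source L W L _ .refl
    (fun _ _ f hf => le_isoClosure _ f (Localization.inverts L W f hf)) (fun _ _ _ hf => hf)
    (Iso.refl _)

include L in
lemma isIso_map_of_isIso_localization_map {E : Type*} [Category* E] {F : C ⥤ E}
    (hF : W.IsInvertedBy F) {X Y : C} (f : X ⟶ Y) [IsIso (L.map f)] : IsIso (F.map f) :=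
  (NatIso.isIso_map_iff (Localization.fac F hF L) f).1
    (inferInstanceAs (IsIso ((Localization.lift F hF L).map (L.map f))))

lemma isIso_localization_map_prod_map [HasBinaryProducts C]
    (hW : ∀ ⦃X Y : C⦄ (s : X ⟶ Y) (Z : C), W s → IsIso (L.map (prod.map s (𝟙 Z))))
    {X Y X' Y' : C} (f : X ⟶ Y) (g : X' ⟶ Y') [IsIso (L.map f)] [IsIso (L.map g)] :
    IsIso (L.map (prod.map f g)) := by
  -- The functor `L (- ⨯ Z)` inverts `W`, so it inverts every morphism that `L` inverts.
  have isIso_map_id {X Y : C} (f : X ⟶ Y) (Z : C) [IsIso (L.map f)] :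
      IsIso (L.map (prod.map f (𝟙 Z))) :=
    isIso_map_of_isIso_localization_map L W (F := prod.functor.flip.obj Z ⋙ L)
      (fun _ _ s hs => hW s Z hs) f
  simp only [prod_map_eq_comp_braiding_conj f g, Functor.map_comp]
  infer_instance

lemma hasFiniteProducts_and_preservesFiniteProducts_of_isLocalization [HasFiniteProducts C]
    (hW : ∀ ⦃X Y : C⦄ (s : X ⟶ Y) (Z : C), W s → IsIso (L.map (prod.map s (𝟙 Z)))) :
    HasFiniteProducts D ∧ PreservesFiniteProducts L := by
  let W' := (isomorphisms D).inverseImage L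
  have : L.IsLocalization W' := isLocalization_inverseImage_isomorphisms L W
  have : W'.IsStableUnderProductsOfShape PEmpty := isStableUnderProductsOfShape_pempty W'
  have : W'.IsStableUnderProductsOfShape WalkingPair :=
    isStableUnderProductsOfShape_walkingPair_of_prod_map W' fun _ _ _ _ f g hf hg =>
      have : IsIso (L.map f) := hf
      have : IsIso (L.map g) := hg
      isIso_localization_map_prod_map L W hW f g
  have := Localization.preservesProductsOfShape L W' PEmpty
  have := Localization.preservesProductsOfShape L W' WalkingPair
  have : HasTerminal D := Localization.hasProductsOfShape L W' PEmpty
  have : HasBinaryProducts D := Localization.hasProductsOfShape L W' WalkingPair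
  exact ⟨hasFiniteProducts_of_has_binary_and_terminal, .of_preserves_binary_and_terminal L⟩

end LocalizationProducts

section CommutativeGroupObjects

open MonObj

variable {D : Type u'} [Category.{v'} D] [CartesianMonoidalCategory D] [BraidedCategory D]

/-- Commutative group objects form a preadditive category: morphisms `G ⟶ H` are added by
multiplying them pointwise in `H`. -/
instance preadditiveCommGrp : Preadditive (CommGrp D) where
  homGroup G H :=
    ((InducedCategory.homEquiv (F := CommGrp.toGrp) (X := G) (Y := H)).trans
      Additive.ofMul).addCommGroup
  add_comp _ _ _ f f' g :=
    CommGrp.hom_ext _ _ (MonObj.mul_comp f.hom.hom.hom f'.hom.hom.hom g.hom.hom.hom)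
  comp_add _ _ _ f g g' :=
    CommGrp.hom_ext _ _ (MonObj.comp_mul f.hom.hom.hom g.hom.hom.hom g'.hom.hom.hom)

instance reflectsIsomorphisms_commGrpForget : (CommGrp.forget D).ReflectsIsomorphisms :=
  inferInstanceAs (CommGrp.forget₂Grp D ⋙ Grp.forget₂Mon D ⋙ Mon.forget D).ReflectsIsomorphisms

variable {C : Type u} [Category.{v} C] (L : C ⥤ D) (W : MorphismProperty C) [L.IsLocalization W]

lemma isInvertedBy_of_comp_commGrpForget_iso (F : C ⥤ CommGrp D)
    (e : F ⋙ CommGrp.forget D ≅ L) : W.IsInvertedBy F := fun _ _ s hs =>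
  have : IsIso ((CommGrp.forget D).map (F.map s)) :=
    (NatIso.isIso_map_iff e s).2 (Localization.inverts L W s hs)
  isIso_of_reflects_iso (F.map s) (CommGrp.forget D)

include W in
lemma exists_section_commGrpForget_of_isLocalization (F : C ⥤ CommGrp D)
    (e : F ⋙ CommGrp.forget D ≅ L) :
    ∃ G : D ⥤ CommGrp D, Nonempty (G ⋙ CommGrp.forget D ≅ 𝟭 D) := by
  have hF : W.IsInvertedBy F := isInvertedBy_of_comp_commGrpForget_iso L W F e
  let G : D ⥤ CommGrp D := Localization.lift F hF L
  have : Localization.Lifting L W L (G ⋙ CommGrp.forget D) :=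
    ⟨Functor.isoWhiskerRight (Localization.fac F hF L) (CommGrp.forget D) ≪≫ e⟩
  exact ⟨G, ⟨Localization.liftNatIso L W L L _ _ (Iso.refl L)⟩⟩

lemma nonempty_preadditive_of_section_commGrpForget (G : D ⥤ CommGrp D)
    (e : G ⋙ CommGrp.forget D ≅ 𝟭 D) : Nonempty (Preadditive D) :=
  ⟨.ofFullyFaithful (.ofCompFaithful ((Functor.FullyFaithful.id D).ofIso e.symm))⟩

end CommutativeGroupObjects

theorem statement2_general {A : Type u} [Category.{v} A] [Preadditive A] [HasFiniteBiproducts A]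
    {D : Type u'} [Category.{v'} D] (L : A ⥤ D) (S : MorphismProperty A) [L.IsLocalization S]
    (hS : ∀ ⦃X Y : A⦄ (s : X ⟶ Y) (Z : A), S s → IsIso (L.map (biprod.map s (𝟙 Z)))) :
    ∃ _ : Preadditive D, HasFiniteBiproducts D ∧ L.Additive := by
  obtain ⟨_, _⟩ := hasFiniteProducts_and_preservesFiniteProducts_of_isLocalization L S
    fun _ _ s Z hs => by
      have := hS s Z hs
      simp only [prod_map_eq_isoProd_conj_biprod_map, Functor.map_comp]
      infer_instance
  let _ : CartesianMonoidalCategory A := .ofHasFiniteProducts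
  let _ : BraidedCategory A := .ofCartesianMonoidalCategory
  let _ : CartesianMonoidalCategory D := .ofHasFiniteProducts
  let _ : BraidedCategory D := .ofCartesianMonoidalCategory
  let _ : L.Braided := .ofChosenFiniteProducts L
  obtain ⟨G, ⟨e⟩⟩ := exists_section_commGrpForget_of_isLocalization L S
    (Preadditive.toCommGrp A ⋙ L.mapCommGrp) (Iso.refl _)
  obtain ⟨_⟩ := nonempty_preadditive_of_section_commGrpForget G e
  have : HasZeroObject D := hasZeroObject_of_hasTerminal_object
  exact ⟨inferInstance, .of_hasFiniteProducts, L.additive_of_preserves_binary_products⟩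

/-- Proposition: if `S` contains all identities and is closed under direct sums, then
the Gabriel–Zisman localization `A[S⁻¹]` is additive and the localization functor is
additive. -/
theorem statement2 {A : Type u} [Category.{v} A] [Preadditive A] [HasFiniteBiproducts A]
    (S : MorphismProperty A)
    (hid : ∀ X : A, S (𝟙 X))
    (hsum : ∀ ⦃X Y X' Y' : A⦄ (s : X ⟶ Y) (s' : X' ⟶ Y'),
      S s → S s' → S (biprod.map s s')) :
    ∃ (h : Preadditive S.Localization),
      (@HasFiniteBiproducts S.Localization _
        (@Preadditive.preadditiveHasZeroMorphisms _ _ h)) ∧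
      (@Functor.Additive A S.Localization _ _ _ h S.Q) :=
  statement2_general S.Q S fun _ _ s Z hs =>
    Localization.inverts S.Q S _ (hsum s (𝟙 Z) hs (hid Z))
end

section
/- Assume that S contains the identity morphisms of all objects of A and is closed under the direct sum operation. Then any morphism of A given by a lower triangular matrix ⊕_{j=1}^{n} S⁻¹_j → ⊕_{j=1}^{n} S⁰_j whose diagonal entries are elements of S (and whose below-diagonal entries are arbitrary morphisms of A) becomes invertible in the Gabriel–Zisman localization A[S⁻¹]. -/
open CategoryTheory Limits Pretriangulated ZeroObject

universe v u v' u'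

attribute [local instance] Limits.hasBinaryBiproducts_of_finite_biproducts

/-!
Adding a fixed object `Z` is an endofunctor of `A`, and it maps `S` into itself. By the universal
property it then carries *every* morphism inverted by the localization to an inverted one: the
class of inverted morphisms is stable under `f ↦ f ⊞ 𝟙 Z`. A triangular `2 × 2` matrix is a product
of a unipotent matrix, which is invertible, and two matrices of the form `a ⊞ 𝟙` and `𝟙 ⊞ d`, so
induction on the number of summands gives all triangular matrices.
-/

section Localization

variable {C D E : Type*} [Category* C] [Category* D] [Category* E]

theorem isIso_map_of_isIso_map_localization {W : MorphismProperty C} (L : C ⥤ D)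
    [L.IsLocalization W] {F : C ⥤ E} (hF : W.IsInvertedBy F) {X Y : C} (f : X ⟶ Y)
    [IsIso (L.map f)] : IsIso (F.map f) :=
  (NatIso.isIso_map_iff (Localization.fac F hF L) f).1 (Functor.map_isIso _ (L.map f))

end Localization

section BinaryBiproducts

variable {C : Type*} [Category* C]

/-- The endofunctor `- ⊞ Z`, through which adding `Z` descends to the localization. -/
noncomputable def biprodRight [HasZeroMorphisms C] [HasBinaryBiproducts C] (Z : C) : C ⥤ C where
  obj X := X ⊞ Z
  map f := biprod.map f (𝟙 Z)

/-- The class of morphisms `W` is stable under `f ↦ f ⊞ 𝟙 Z`. If `W` also contains the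
isomorphisms and is closed under composition, it contains the triangular matrices with diagonal
entries in `W`. -/
def IsStableUnderBiprodId [HasZeroMorphisms C] [HasBinaryBiproducts C]
    (W : MorphismProperty C) : Prop :=
  ∀ Z : C, W ≤ W.inverseImage (biprodRight Z)

theorem isStableUnderBiprodId_inverseImage_isomorphisms [HasZeroMorphisms C]
    [HasBinaryBiproducts C] {D : Type*} [Category* D] (S : MorphismProperty C) (L : C ⥤ D)
    [L.IsLocalization S] (hS : ∀ Z : C, S.IsInvertedBy (biprodRight Z ⋙ L)) :
    IsStableUnderBiprodId ((MorphismProperty.isomorphisms D).inverseImage L) :=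
  fun Z _ _ f (_ : IsIso (L.map f)) => isIso_map_of_isIso_map_localization L (hS Z) f

theorem biprodOfComponents_zero_eq_comp [Preadditive C] [HasBinaryBiproducts C] {X₁ X₂ Y₁ Y₂ : C}
    (a : X₁ ⟶ Y₁) (b : X₁ ⟶ Y₂) (d : X₂ ⟶ Y₂) :
    Biprod.ofComponents a b 0 d =
      biprod.map (𝟙 X₁) d ≫ (Biprod.unipotentUpper b).hom ≫ biprod.map a (𝟙 Y₂) := by
  ext <;> simp [Biprod.ofComponents]

namespace IsStableUnderBiprodId

variable {W : MorphismProperty C}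

theorem id_map [HasZeroMorphisms C] [HasBinaryBiproducts C] [W.RespectsIso]
    (hW : IsStableUnderBiprodId W) {X Y : C} {f : X ⟶ Y} (hf : W f) (Z : C) :
    W (biprod.map (𝟙 Z) f) := by
  rw [← biprod.braiding_map_braiding, W.cancel_left_of_respectsIso,
    W.cancel_right_of_respectsIso]
  exact hW Z f hf

theorem ofComponents_zero [Preadditive C] [HasBinaryBiproducts C] [W.RespectsIso]
    [W.IsStableUnderComposition] (hW : IsStableUnderBiprodId W) {X₁ X₂ Y₁ Y₂ : C} {a : X₁ ⟶ Y₁}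
    (ha : W a) (b : X₁ ⟶ Y₂) {d : X₂ ⟶ Y₂} (hd : W d) : W (Biprod.ofComponents a b 0 d) := by
  rw [biprodOfComponents_zero_eq_comp]
  refine W.comp_mem _ _ (hW.id_map hd X₁) ?_
  rw [W.cancel_left_of_respectsIso]
  exact hW Y₂ a ha

end IsStableUnderBiprodId

end BinaryBiproducts

section FiniteBiproducts

variable {C : Type*} [Category* C] [Preadditive C] [HasFiniteBiproducts C]

/-- The isomorphism splitting off the first summand of a biproduct indexed by `Fin (n + 1)`. -/
noncomputable def biproductFinSuccIso {n : ℕ} (P : Fin (n + 1) → C) :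
    ⨁ P ≅ P 0 ⊞ ⨁ fun i : Fin n => P i.succ where
  hom := biprod.lift (biproduct.π P 0) (biproduct.lift fun i => biproduct.π P i.succ)
  inv := biprod.desc (biproduct.ι P 0) (biproduct.desc fun i => biproduct.ι P i.succ)
  hom_inv_id := by
    simp only [biprod.lift_desc, biproduct.lift_desc]
    rw [← Fin.sum_univ_succ fun i => biproduct.π P i ≫ biproduct.ι P i, biproduct.total]
  inv_hom_id := by
    ext i <;> simp [biproduct.ι_π, (Fin.succ_ne_zero _).symm]

theorem biproductMatrix_eq_ofComponents {n : ℕ} {P Q : Fin (n + 1) → C}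
    (m : ∀ k l, P k ⟶ Q l) :
    biproduct.matrix m = (biproductFinSuccIso P).hom ≫
      Biprod.ofComponents (m 0 0) (biproduct.lift fun l : Fin n => m 0 l.succ)
        (biproduct.desc fun k : Fin n => m k.succ 0)
        (biproduct.matrix fun k l : Fin n => m k.succ l.succ) ≫
      (biproductFinSuccIso Q).inv := by
  rw [← Iso.inv_comp_eq, Iso.eq_comp_inv]
  ext <;> simp [biproductFinSuccIso]

theorem IsStableUnderBiprodId.biproductMatrix {W : MorphismProperty C} [W.IsMultiplicative]
    [W.RespectsIso] (hW : IsStableUnderBiprodId W) {n : ℕ} {P Q : Fin n → C}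
    {m : ∀ k l, P k ⟶ Q l} (hdiag : ∀ k, W (m k k)) (htriang : ∀ k l, l < k → m k l = 0) :
    W (biproduct.matrix m) := by
  induction n with
  | zero =>
    have : IsIso (biproduct.matrix m) :=
      ⟨0, by ext j; exact j.elim0, by ext j; exact j.elim0⟩
    exact W.of_isIso _
  | succ n ih =>
    have offdiagonal_column : (biproduct.desc fun k : Fin n => m k.succ 0) = 0 := by
      ext k
      simp [htriang _ _ k.succ_pos]
    have tail : W (biproduct.matrix fun k l : Fin n => m k.succ l.succ) :=
      ih (fun k => hdiag k.succ) fun k l h => htriang _ _ (Fin.succ_lt_succ_iff.2 h)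
    rw [biproductMatrix_eq_ofComponents, offdiagonal_column, W.cancel_left_of_respectsIso,
      W.cancel_right_of_respectsIso]
    exact hW.ofComponents_zero (hdiag 0) _ tail

theorem statement12_general {D : Type*} [Category* D] (S : MorphismProperty C) (L : C ⥤ D)
    [L.IsLocalization S] (hS : ∀ Z : C, S.IsInvertedBy (biprodRight Z ⋙ L)) {n : ℕ}
    {P Q : Fin n → C} {m : ∀ k l, P k ⟶ Q l} (hdiag : ∀ k, IsIso (L.map (m k k)))
    (htriang : ∀ k l, l < k → m k l = 0) : IsIso (L.map (biproduct.matrix m)) :=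
  (isStableUnderBiprodId_inverseImage_isomorphisms S L hS).biproductMatrix hdiag htriang

end FiniteBiproducts

/-- Proposition: if `S` contains all identities and is closed under direct sums, then
any lower triangular matrix morphism between finite biproducts, with diagonal entries in
`S`, becomes invertible in the Gabriel–Zisman localization `A[S⁻¹]`. -/
theorem statement12 {A : Type u} [Category.{v} A] [Preadditive A] [HasZeroObject A]
    [HasFiniteBiproducts A] (S : MorphismProperty A)
    (hid : ∀ X : A, S (𝟙 X))
    (hsum : ∀ ⦃X Y X' Y' : A⦄ (s : X ⟶ Y) (s' : X' ⟶ Y'),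
      S s → S s' → S (biprod.map s s'))
    (n : ℕ) (P Q : Fin n → A) (m : ∀ k l : Fin n, P k ⟶ Q l)
    (hdiag : ∀ k : Fin n, S (m k k))
    (htriang : ∀ k l : Fin n, l < k → m k l = 0) :
    IsIso (S.Q.map (biproduct.matrix m)) := by
  exact statement12_general S S.Q (fun Z _ _ s hs => S.Q_inverts _ (hsum s (𝟙 Z) hs (hid Z)))
    (fun k => S.Q_inverts _ (hdiag k)) htriang
end
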